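/- Let K ∈ ℕ and let A and B be K×K ML-matrices such that A is irreducible, A_{i,j} ≥ B_{i,j} for all i,j ∈ {1,…,K}, and A_{k,l} > B_{k,l} for at least one pair (k,l). Then λ(A) > λ(B). -/

import Mathlib

/-!
The proof is the Collatz–Wielandt argument from Perron–Frobenius theory. Write `β = λ(B)` and call
a vector `x ≥ 0`, `x ≠ 0` *subinvariant* for `A` at level `t` if `t x ≤ A x` entrywise.

* The entrywise modulus of a complex eigenvector of `B` whose eigenvalue has real part `β` satisfies
  `β x ≤ B x ≤ A x` (`re_smul_norm_le_mulVec_norm`), so subinvariant vectors at level `β` exist.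
* By compactness of the standard simplex there is a largest level `r ≥ β` admitting a subinvariant
  vector (`exists_maximal_level`).
* Irreducibility yields an entrywise positive matrix `P` commuting with `A`, which scales every
  eigenvector of `A`: a finite sum of powers of `A + c I` (`exists_pos_commuting`). If `x` is
  subinvariant at the maximal level `r` but `A x ≠ r x`, then `P x` satisfies
  `r (P x) < A (P x)` strictly in every coordinate, so the level could be raised. Hence `A x = r x`,
  and since `P x > 0` is a multiple of `x`, also `x > 0` (`eigenvector_of_maximal`).

In particular `r` is an eigenvalue of `A`, whence `β ≤ r ≤ λ(A)`. If `β = r`, the eigenvector of `B`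
gives a vector `x` with `r x ≤ B x ≤ A x` at the maximal level, so `A x = r x = B x` with `x > 0`,
which contradicts the strict inequality between some entries of `A` and `B`.
-/


/-- A square real matrix is an ML-matrix if its off-diagonal entries are nonnegative. -/
def IsMLMatrix {K : ℕ} (A : Matrix (Fin K) (Fin K) ℝ) : Prop :=
  ∀ i j : Fin K, i ≠ j → 0 ≤ A i j

/-- An ML-matrix is irreducible if any two indices are connected by a finite chain of
strictly positive entries. -/
def IsIrreducibleML {K : ℕ} (A : Matrix (Fin K) (Fin K) ℝ) : Prop :=
  ∀ i j : Fin K, ∃ (n : ℕ) (c : Fin (n + 1) → Fin K), c 0 = i ∧ c (Fin.last n) = j ∧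
    ∀ k : Fin n, 0 < A (c k.castSucc) (c k.succ)

/-- `λ(M)`: the maximal real part of the complex eigenvalues of a real square matrix `M`. -/
noncomputable def maxRealEigenvalue {K : ℕ} (M : Matrix (Fin K) (Fin K) ℝ) : ℝ :=
  sSup (Complex.re '' spectrum ℂ (M.map Complex.ofReal))

open scoped Matrix

/-- Perron–Frobenius subinvariance: `x` is a nonzero nonnegative vector with `t x ≤ A x`. -/
def IsSubinvariant {K : ℕ} (A : Matrix (Fin K) (Fin K) ℝ) (t : ℝ) (x : Fin K → ℝ) : Prop :=
  (∀ i, 0 ≤ x i) ∧ x ≠ 0 ∧ ∀ i, t * x i ≤ (A *ᵥ x) i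

lemma exists_shift {K : ℕ} (A : Matrix (Fin K) (Fin K) ℝ) :
    ∃ c : ℝ, 0 ≤ c ∧ ∀ i, 0 ≤ A i i + c := by
  refine ⟨∑ i, |A i i|, Finset.sum_nonneg fun i _ => abs_nonneg _, fun i => ?_⟩
  have h1 := Finset.single_le_sum (f := fun i => |A i i|) (fun i _ => abs_nonneg _)
    (Finset.mem_univ i)
  have h2 := neg_abs_le (A i i)
  have h3 : |A i i| ≤ ∑ i, |A i i| := h1
  linarith

lemma pow_entry_nonneg {K : ℕ} {M : Matrix (Fin K) (Fin K) ℝ} (hM : ∀ i j, 0 ≤ M i j) (n : ℕ) :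
    ∀ i j, 0 ≤ (M ^ n) i j := by
  induction n with
  | zero => intro i j; rw [pow_zero, Matrix.one_apply]; split_ifs <;> norm_num
  | succ n ih =>
    intro i j
    rw [pow_succ, Matrix.mul_apply]
    exact Finset.sum_nonneg fun k _ => mul_nonneg (ih i k) (hM k j)

/-- A chain of `n` positive entries from `c 0` to `c n` makes the corresponding entry of the `n`-th
power positive. -/
lemma pow_entry_pos {K : ℕ} {M : Matrix (Fin K) (Fin K) ℝ} (hM : ∀ i j, 0 ≤ M i j) (n : ℕ)
    (c : Fin (n + 1) → Fin K) (hc : ∀ k : Fin n, 0 < M (c k.castSucc) (c k.succ)) :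
    0 < (M ^ n) (c 0) (c (Fin.last n)) := by
  induction n with
  | zero => simp
  | succ n ih =>
    have h := ih (fun k => c k.castSucc) (fun k => by simpa using hc k.castSucc)
    rw [pow_succ, Matrix.mul_apply]
    refine Finset.sum_pos' (fun k _ => mul_nonneg (pow_entry_nonneg hM n _ k) (hM k _))
      ⟨c (Fin.last n).castSucc, Finset.mem_univ _, mul_pos ?_ ?_⟩
    · simpa using h
    · simpa using hc (Fin.last n)

lemma pow_mulVec_eigen {K : ℕ} {M : Matrix (Fin K) (Fin K) ℝ} {s : ℝ} {x : Fin K → ℝ}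
    (h : M *ᵥ x = s • x) (n : ℕ) : (M ^ n) *ᵥ x = s ^ n • x := by
  induction n with
  | zero => simp
  | succ n ih => rw [pow_succ, ← Matrix.mulVec_mulVec, h, Matrix.mulVec_smul, ih, smul_smul, pow_succ']

/-- An irreducible ML-matrix `A` commutes with some entrywise positive `P` for which every
eigenvector of `A` is an eigenvector. -/
lemma exists_pos_commuting {K : ℕ} {A : Matrix (Fin K) (Fin K) ℝ} (hA : IsMLMatrix A)
    (hirr : IsIrreducibleML A) :
    ∃ P : Matrix (Fin K) (Fin K) ℝ, (∀ i j, 0 < P i j) ∧ Commute A P ∧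
      ∀ (r : ℝ) (x : Fin K → ℝ), A *ᵥ x = r • x → ∃ p : ℝ, P *ᵥ x = p • x := by
  obtain ⟨c, hc, hdiag⟩ := exists_shift A
  set M : Matrix (Fin K) (Fin K) ℝ := A + c • 1 with hMdef
  have hMA : ∀ i j, A i j ≤ M i j := by
    intro i j
    simp only [hMdef, Matrix.add_apply, Matrix.smul_apply, Matrix.one_apply, smul_eq_mul]
    split_ifs <;> simp [hc]
  have hM : ∀ i j, 0 ≤ M i j := by
    intro i j
    by_cases hij : i = j
    · subst hij
      simpa [hMdef] using hdiag i
    · exact (hA i j hij).trans (hMA i j)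
  have hpos : ∀ i j, ∃ n : ℕ, 0 < (M ^ n) i j := by
    intro i j
    obtain ⟨n, w, rfl, rfl, hw⟩ := hirr i j
    exact ⟨n, pow_entry_pos hM n w fun k => (hw k).trans_le (hMA _ _)⟩
  choose N hN using hpos
  have hcomm : Commute A M := by
    rw [hMdef]
    exact (Commute.refl A).add_right ((Commute.one_right A).smul_right c)
  -- One power of `M` per pair `(i, j)`, so that no uniform exponent (aperiodicity) is needed.
  refine ⟨∑ q : Fin K × Fin K, M ^ N q.1 q.2, ?_, ?_, ?_⟩
  · intro i j
    rw [Matrix.sum_apply]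
    exact Finset.sum_pos' (fun q _ => pow_entry_nonneg hM _ i j)
      ⟨(i, j), Finset.mem_univ _, hN i j⟩
  · exact Commute.sum_right _ _ _ fun q _ => hcomm.pow_right _
  · intro r x hx
    have hMx : M *ᵥ x = (r + c) • x := by
      rw [hMdef, Matrix.add_mulVec, hx, Matrix.smul_mulVec, Matrix.one_mulVec, add_smul]
    refine ⟨∑ q : Fin K × Fin K, (r + c) ^ N q.1 q.2, ?_⟩
    rw [Matrix.sum_mulVec, Finset.sum_smul]
    exact Finset.sum_congr rfl fun q _ => pow_mulVec_eigen hMx _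

lemma pos_mulVec {K : ℕ} {P : Matrix (Fin K) (Fin K) ℝ} (hP : ∀ i j, 0 < P i j)
    {x : Fin K → ℝ} (hx : ∀ i, 0 ≤ x i) (hx0 : x ≠ 0) (i : Fin K) : 0 < (P *ᵥ x) i := by
  obtain ⟨j, hj⟩ := Function.ne_iff.mp hx0
  exact Finset.sum_pos' (fun k _ => mul_nonneg (hP i k).le (hx k))
    ⟨j, Finset.mem_univ _, mul_pos (hP i j) ((hx j).lt_of_ne' hj)⟩

/-- A subinvariant vector at the maximal level is an entrywise positive eigenvector. -/
lemma eigenvector_of_maximal {K : ℕ} {A : Matrix (Fin K) (Fin K) ℝ} (hA : IsMLMatrix A)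
    (hirr : IsIrreducibleML A) {r : ℝ} {x : Fin K → ℝ} (hx : IsSubinvariant A r x)
    (hmax : ∀ t y, IsSubinvariant A t y → t ≤ r) :
    A *ᵥ x = r • x ∧ ∀ i, 0 < x i := by
  obtain ⟨P, hP, hcomm, hscale⟩ := exists_pos_commuting hA hirr
  obtain ⟨hx0, hxne, hxA⟩ := hx
  have hPx := pos_mulVec hP hx0 hxne
  have heq : A *ᵥ x = r • x := by
    by_contra hne
    have hz := pos_mulVec hP (x := A *ᵥ x - r • x)
      (fun i => by simpa using hxA i) (sub_ne_zero.mpr hne)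
    set y := P *ᵥ x with hy
    have hstrict : ∀ i, r * y i < (A *ᵥ y) i := by
      intro i
      have := hz i
      rw [Matrix.mulVec_sub, Matrix.mulVec_smul, Matrix.mulVec_mulVec, ← hcomm.eq,
        ← Matrix.mulVec_mulVec, ← hy] at this
      exact sub_pos.mp this
    have hne' : (Finset.univ : Finset (Fin K)).Nonempty := by
      obtain ⟨j, -⟩ := Function.ne_iff.mp hxne
      exact ⟨j, Finset.mem_univ _⟩
    -- The level can be raised to the smallest Collatz–Wielandt ratio of `P x`.
    obtain ⟨m, -, hm⟩ := Finset.exists_min_image Finset.univ (fun i => (A *ᵥ y) i / y i) hne'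
    have hle := hmax ((A *ᵥ y) m / y m) y
      ⟨fun i => (hPx i).le, fun h => (hPx m).ne' (congrFun h m), fun i => by
        have := hm i (Finset.mem_univ _)
        rwa [le_div_iff₀ (hPx i)] at this⟩
    rw [div_le_iff₀ (hPx m)] at hle
    exact absurd (hstrict m) (not_lt.mpr hle)
  refine ⟨heq, fun i => (hx0 i).lt_of_ne' fun hi => ?_⟩
  obtain ⟨p, hp⟩ := hscale r x heq
  have := hPx i
  rw [hp] at this
  simp [hi] at this

/-- A subinvariant vector can be normalised to lie in the standard simplex. -/
lemma IsSubinvariant.normalize {K : ℕ} {A : Matrix (Fin K) (Fin K) ℝ} {t : ℝ} {x : Fin K → ℝ}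
    (hx : IsSubinvariant A t x) :
    ∃ y ∈ stdSimplex ℝ (Fin K), ∀ i, t * y i ≤ (A *ᵥ y) i := by
  obtain ⟨hx0, hxne, hxA⟩ := hx
  obtain ⟨j, hj⟩ := Function.ne_iff.mp hxne
  have hs : 0 < ∑ i, x i :=
    Finset.sum_pos' (fun i _ => hx0 i) ⟨j, Finset.mem_univ _, (hx0 j).lt_of_ne' hj⟩
  refine ⟨(∑ i, x i)⁻¹ • x, ⟨fun i => mul_nonneg (inv_nonneg.mpr hs.le) (hx0 i), ?_⟩, fun i => ?_⟩
  · simp only [Pi.smul_apply, smul_eq_mul, ← Finset.mul_sum]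
    exact inv_mul_cancel₀ hs.ne'
  · rw [Matrix.mulVec_smul]
    simp only [Pi.smul_apply, smul_eq_mul]
    have := mul_le_mul_of_nonneg_left (hxA i) (inv_nonneg.mpr hs.le)
    linarith

lemma level_le_of_mem_stdSimplex {K : ℕ} (A : Matrix (Fin K) (Fin K) ℝ) {t : ℝ} {y : Fin K → ℝ}
    (hy : y ∈ stdSimplex ℝ (Fin K)) (h : ∀ i, t * y i ≤ (A *ᵥ y) i) :
    t ≤ ∑ i, ∑ j, |A i j| := by
  calc t = ∑ i, t * y i := by rw [← Finset.mul_sum, hy.2, mul_one]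
    _ ≤ ∑ i, ∑ j, |A i j| := by
      refine Finset.sum_le_sum fun i _ => (h i).trans ?_
      change ∑ j, A i j * y j ≤ _
      refine Finset.sum_le_sum fun j _ => ?_
      have h1 : y j ≤ 1 := by
        rw [← hy.2]
        exact Finset.single_le_sum (fun i _ => hy.1 i) (Finset.mem_univ j)
      calc A i j * y j ≤ |A i j| * y j := mul_le_mul_of_nonneg_right (le_abs_self _) (hy.1 j)
        _ ≤ |A i j| := mul_le_of_le_one_right (abs_nonneg _) h1

lemma exists_maximal_level {K : ℕ} (A : Matrix (Fin K) (Fin K) ℝ) {β : ℝ} {x₀ : Fin K → ℝ}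
    (h₀ : IsSubinvariant A β x₀) :
    ∃ r x, IsSubinvariant A r x ∧ ∀ t y, IsSubinvariant A t y → t ≤ r := by
  set S : Set (ℝ × (Fin K → ℝ)) :=
    (Set.Icc β (∑ i, ∑ j, |A i j|) ×ˢ stdSimplex ℝ (Fin K)) ∩
      {q | ∀ i, q.1 * q.2 i ≤ (A *ᵥ q.2) i} with hS
  have hclosed : IsClosed {q : ℝ × (Fin K → ℝ) | ∀ i, q.1 * q.2 i ≤ (A *ᵥ q.2) i} := by
    simp only [Set.ofPred_forall]
    refine isClosed_iInter fun i => isClosed_le (by fun_prop) ?_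
    simp only [Matrix.mulVec, dotProduct]
    fun_prop
  have hcompact : IsCompact S :=
    (isCompact_Icc.prod (isCompact_stdSimplex ℝ (Fin K))).inter_right hclosed
  have hmem : ∀ t y, IsSubinvariant A t y → β ≤ t → ∃ z, (t, z) ∈ S := by
    intro t y hy hβ
    obtain ⟨z, hz, hzA⟩ := hy.normalize
    exact ⟨z, ⟨⟨hβ, level_le_of_mem_stdSimplex A hz hzA⟩, hz⟩, hzA⟩
  obtain ⟨z₀, hz₀⟩ := hmem β x₀ h₀ le_rfl
  obtain ⟨⟨r, x⟩, ⟨⟨hrβ, hx⟩, hxA⟩, hmax⟩ :=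
    hcompact.exists_isMaxOn ⟨_, hz₀⟩ continuous_fst.continuousOn
  refine ⟨r, x, ⟨hx.1, ?_, hxA⟩, fun t y hy => ?_⟩
  · rintro rfl
    simpa using hx.2
  · rcases le_total β t with hβ | hβ
    · obtain ⟨z, hz⟩ := hmem t y hy hβ
      exact hmax hz
    · exact hβ.trans hrβ.1

lemma exists_eigenvector_of_mem_spectrum {K : ℕ} {M : Matrix (Fin K) (Fin K) ℂ} {μ : ℂ}
    (h : μ ∈ spectrum ℂ M) : ∃ v, v ≠ 0 ∧ M *ᵥ v = μ • v := by
  rw [← Matrix.spectrum_toLin', ← Module.End.hasEigenvalue_iff_mem_spectrum] at h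
  obtain ⟨v, hv⟩ := h.exists_hasEigenvector
  exact ⟨v, hv.2, by simpa using hv.apply_eq_smul⟩

lemma mem_spectrum_of_eigenvector {K : ℕ} {M : Matrix (Fin K) (Fin K) ℂ} {μ : ℂ} {v : Fin K → ℂ}
    (hv : v ≠ 0) (h : M *ᵥ v = μ • v) : μ ∈ spectrum ℂ M := by
  rw [← Matrix.spectrum_toLin', ← Module.End.hasEigenvalue_iff_mem_spectrum]
  exact Module.End.hasEigenvalue_of_hasEigenvector (x := v)
    (Module.End.hasEigenvector_iff.mpr ⟨Module.End.mem_eigenspace_iff.mpr (by simpa using h), hv⟩)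

/-- The triangle inequality for an eigenvector of an ML-matrix. Multiplying the `i`-th eigenvalue
equation by the conjugate of `v i` and taking real parts leaves the diagonal entry, whose sign is
unknown, untouched. -/
lemma re_smul_norm_le_mulVec_norm {K : ℕ} {B : Matrix (Fin K) (Fin K) ℝ} (hB : IsMLMatrix B)
    {μ : ℂ} {v : Fin K → ℂ} (h : B.map Complex.ofReal *ᵥ v = μ • v) (i : Fin K) :
    μ.re * ‖v i‖ ≤ (B *ᵥ fun j => ‖v j‖) i := by
  have hsum : (B *ᵥ fun j => ‖v j‖) i = ∑ j, B i j * ‖v j‖ := rfl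
  rw [hsum]
  rcases eq_or_ne (v i) 0 with h0 | h0
  · rw [h0, norm_zero, mul_zero]
    refine Finset.sum_nonneg fun j _ => ?_
    rcases eq_or_ne i j with rfl | hij
    · simp [h0]
    · exact mul_nonneg (hB i j hij) (norm_nonneg _)
  · have hpos : 0 < ‖v i‖ := norm_pos_iff.mpr h0
    have hi : ∑ j, (B i j : ℂ) * v j = μ * v i := congrFun h i
    have hself : (starRingEnd ℂ) (v i) * v i = ((‖v i‖ ^ 2 : ℝ) : ℂ) := by
      rw [Complex.conj_mul']
      push_cast
      rfl
    have hre : μ.re * ‖v i‖ ^ 2 = ∑ j, B i j * ((starRingEnd ℂ) (v i) * v j).re := by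
      have h1 : μ * ((‖v i‖ ^ 2 : ℝ) : ℂ) =
          ∑ j, (B i j : ℂ) * ((starRingEnd ℂ) (v i) * v j) := by
        rw [← hself, mul_left_comm, ← hi, Finset.mul_sum]
        exact Finset.sum_congr rfl fun j _ => by ring
      have h2 := congrArg Complex.re h1
      rw [Complex.re_mul_ofReal, Complex.re_sum] at h2
      rw [h2]
      exact Finset.sum_congr rfl fun j _ => Complex.re_ofReal_mul _ _
    have hle : μ.re * ‖v i‖ ^ 2 ≤ ∑ j, B i j * (‖v i‖ * ‖v j‖) := by
      rw [hre]
      refine Finset.sum_le_sum fun j _ => ?_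
      rcases eq_or_ne i j with rfl | hij
      · rw [hself, Complex.ofReal_re, sq]
      · refine mul_le_mul_of_nonneg_left ((Complex.re_le_norm _).trans ?_) (hB i j hij)
        rw [norm_mul, Complex.norm_conj]
    have hfac : ∑ j, B i j * (‖v i‖ * ‖v j‖) = (∑ j, B i j * ‖v j‖) * ‖v i‖ := by
      rw [Finset.sum_mul]
      exact Finset.sum_congr rfl fun j _ => by ring
    rw [hfac] at hle
    refine le_of_mul_le_mul_right ?_ hpos
    linarith [hle]

lemma exists_spectrum_re_eq {K : ℕ} [NeZero K] (M : Matrix (Fin K) (Fin K) ℝ) :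
    ∃ μ ∈ spectrum ℂ (M.map Complex.ofReal), μ.re = maxRealEigenvalue M := by
  have hne : (Complex.re '' spectrum ℂ (M.map Complex.ofReal)).Nonempty :=
    (spectrum.nonempty_of_isAlgClosed_of_finiteDimensional ℂ (M.map Complex.ofReal)).image _
  exact hne.csSup_mem ((Matrix.finite_spectrum _).image _)

lemma eigenvalue_le_maxRealEigenvalue {K : ℕ} {M : Matrix (Fin K) (Fin K) ℝ} {r : ℝ}
    {x : Fin K → ℝ} (hx : x ≠ 0) (h : M *ᵥ x = r • x) : r ≤ maxRealEigenvalue M := by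
  refine le_csSup ((Matrix.finite_spectrum _).image _).bddAbove ⟨(r : ℂ), ?_, Complex.ofReal_re r⟩
  refine mem_spectrum_of_eigenvector (v := fun i => (x i : ℂ)) ?_ ?_
  · obtain ⟨j, hj⟩ := Function.ne_iff.mp hx
    exact Function.ne_iff.mpr ⟨j, by simpa using hj⟩
  · ext i
    have hi : ∑ j, M i j * x j = r * x i := congrFun h i
    change ∑ j, (M i j : ℂ) * (x j : ℂ) = (r : ℂ) * (x i : ℂ)
    exact_mod_cast hi

/-- If `A` and `B` are ML-matrices, `A` irreducible, with `A ≥ B` entrywise and a strict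
inequality at some entry, then `λ(A) > λ(B)`. -/
theorem maxRealEigenvalue_lt_of_le_of_irreducible {K : ℕ}
    (A B : Matrix (Fin K) (Fin K) ℝ)
    (hA : IsMLMatrix A) (hB : IsMLMatrix B) (hirr : IsIrreducibleML A)
    (hle : ∀ i j : Fin K, B i j ≤ A i j)
    (hlt : ∃ k l : Fin K, B k l < A k l) :
    maxRealEigenvalue B < maxRealEigenvalue A := by
  obtain ⟨k, l, hkl⟩ := hlt
  have : NeZero K := ⟨fun h => by subst h; exact k.elim0⟩
  obtain ⟨μ, hμ, hμB⟩ := exists_spectrum_re_eq B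
  obtain ⟨v, hv, hBv⟩ := exists_eigenvector_of_mem_spectrum hμ
  set x : Fin K → ℝ := fun j => ‖v j‖
  have hx0 : ∀ i, 0 ≤ x i := fun i => norm_nonneg _
  have hxne : x ≠ 0 := fun h => hv (funext fun i => norm_eq_zero.mp (congrFun h i))
  have hxB : ∀ i, μ.re * x i ≤ (B *ᵥ x) i := re_smul_norm_le_mulVec_norm hB hBv
  have hBA : ∀ i, (B *ᵥ x) i ≤ (A *ᵥ x) i := by
    intro i
    change ∑ j, B i j * x j ≤ ∑ j, A i j * x j
    exact Finset.sum_le_sum fun j _ => mul_le_mul_of_nonneg_right (hle i j) (hx0 j)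
  have hsub : IsSubinvariant A μ.re x := ⟨hx0, hxne, fun i => (hxB i).trans (hBA i)⟩
  obtain ⟨r, y, hy, hmax⟩ := exists_maximal_level A hsub
  have hrA : r ≤ maxRealEigenvalue A :=
    eigenvalue_le_maxRealEigenvalue hy.2.1 (eigenvector_of_maximal hA hirr hy hmax).1
  rw [← hμB]
  refine lt_of_lt_of_le ((hmax _ _ hsub).lt_of_ne fun hr => ?_) hrA
  obtain ⟨hAx, hxpos⟩ := eigenvector_of_maximal hA hirr hsub (by rwa [hr])
  -- At the row `k` the inequality `B x ≤ A x = λ(B) x ≤ B x` would be strict.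
  have hstrict : (B *ᵥ x) k < (A *ᵥ x) k :=
    Finset.sum_lt_sum (fun j _ => mul_le_mul_of_nonneg_right (hle k j) (hx0 j))
      ⟨l, Finset.mem_univ _, mul_lt_mul_of_pos_right hkl (hxpos l)⟩
  rw [hAx] at hstrict
  exact absurd (hxB k) (not_le.mpr hstrict)
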